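/- Let a > 0 be real and let s ∈ ℂ with Re(s) > 1. Then ∫₀^∞ x^{s+a-2} e^{-x} / (a γ(a,x)) dx = Γ(s-1) + (a/(1+a)) · Γ(s) + ∫₀^∞ (1/(a γ(a,x)) − x^{-a} − (a/(1+a)) · x^{1-a}) · x^{s+a-2} e^{-x} dx, where Γ is the (complex) Gamma function. -/

import Mathlib

/-!
The right-hand side is the left-hand side with the first two terms `x ^ (-a)` and
`(a / (1 + a)) * x ^ (1 - a)` of the small-`x` expansion of `1 / (a * lowerGamma a x)` subtracted
under the integral sign and added back: against `x ^ (s + a - 2) * exp (-x)` these two terms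
integrate to `Γ (s - 1)` and `(a / (1 + a)) * Γ s`. The identity is then linearity of the integral,
and the only analytic content is that the integrand on the left is integrable.

For `x ≤ 1` the bound `exp (-t) ≥ exp (-1)` on `(0, x)` gives `a * lowerGamma a x ≥ exp (-1) * x ^ a`,
and for `x ≥ 1` monotonicity gives `a * lowerGamma a x ≥ exp (-1)`. Hence
`1 / (a * lowerGamma a x) ≤ exp 1 * (x ^ (-a) + 1)`, and the integrand is dominated by the sum of
the Gamma integrands at `Re s - 1 > 0` and `Re s + a - 1 > 0`.
-/

open MeasureTheory Set

/-- The lower incomplete gamma function `γ(a, x) = ∫₀ˣ t^(a-1) e^(-t) dt`. -/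
noncomputable def lowerGamma (a x : ℝ) : ℝ :=
  ∫ t in Set.Ioo (0 : ℝ) x, t ^ (a - 1) * Real.exp (-t)

/-- The domain `D = ℂ \ {1, 0, -1, -2, …}` of the analytic continuation. -/
def fhzDomain : Set ℂ := {s : ℂ | ∀ n : ℕ, s ≠ 1 - (n : ℂ)}

lemma lowerGamma_integrableOn {a : ℝ} (ha : 0 < a) :
    IntegrableOn (fun t : ℝ => t ^ (a - 1) * Real.exp (-t)) (Ioi 0) := by
  simpa only [mul_comm] using Real.GammaIntegral_convergent ha

lemma lowerGamma_mono {a : ℝ} (ha : 0 < a) : Monotone (lowerGamma a) := by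
  intro x y hxy
  refine setIntegral_mono_set ((lowerGamma_integrableOn ha).mono_set Ioo_subset_Ioi_self) ?_
    (Ioo_subset_Ioo_right hxy).eventuallyLE
  refine (ae_restrict_iff' measurableSet_Ioo).2 (.of_forall fun t ht => ?_)
  have := ht.1
  simp only [Pi.zero_apply]
  positivity

lemma le_lowerGamma_of_le_one {a x : ℝ} (ha : 0 < a) (hx : 0 < x) (hx1 : x ≤ 1) :
    Real.exp (-1) * x ^ a ≤ a * lowerGamma a x := by
  have hI : IntegrableOn (fun t : ℝ => t ^ (a - 1)) (Ioo 0 x) :=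
    (intervalIntegral.intervalIntegrable_rpow' (by linarith : -1 < a - 1)).1.mono_set
      Ioo_subset_Ioc_self
  have h1 : ∫ t in Ioo (0 : ℝ) x, t ^ (a - 1) * Real.exp (-1) = x ^ a / a * Real.exp (-1) := by
    rw [integral_mul_const, ← integral_Ioc_eq_integral_Ioo,
      ← intervalIntegral.integral_of_le hx.le, integral_rpow (Or.inl (by linarith))]
    simp [Real.zero_rpow ha.ne']
  have h2 : x ^ a / a * Real.exp (-1) ≤ lowerGamma a x := by
    rw [← h1]
    refine setIntegral_mono_on (hI.mul_const _)
      ((lowerGamma_integrableOn ha).mono_set Ioo_subset_Ioi_self) measurableSet_Ioo fun t ht => ?_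
    have h0 := ht.1
    have h3 : Real.exp (-1) ≤ Real.exp (-t) := Real.exp_le_exp.2 (by linarith [ht.2])
    gcongr
  calc Real.exp (-1) * x ^ a = a * (x ^ a / a * Real.exp (-1)) := by field_simp
    _ ≤ _ := by gcongr

lemma one_div_lowerGamma_le {a x : ℝ} (ha : 0 < a) (hx : 0 < x) :
    0 < a * lowerGamma a x ∧
      1 / (a * lowerGamma a x) ≤ Real.exp 1 * x ^ (-a) + Real.exp 1 := by
  rcases le_total x 1 with h | h
  · have h1 := le_lowerGamma_of_le_one ha hx h
    have h0 : 0 < Real.exp (-1) * x ^ a := by positivity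
    refine ⟨h0.trans_le h1, (one_div_le_one_div_of_le h0 h1).trans ?_⟩
    rw [Real.exp_neg, Real.rpow_neg hx.le, one_div, mul_inv, inv_inv]
    linarith [Real.exp_pos 1]
  · have h1 : Real.exp (-1) ≤ a * lowerGamma a x := by
      have h2 := le_lowerGamma_of_le_one ha one_pos le_rfl
      rw [Real.one_rpow, mul_one] at h2
      exact h2.trans (mul_le_mul_of_nonneg_left (lowerGamma_mono ha h) ha.le)
    have h0 : 0 < Real.exp (-1) := by positivity
    refine ⟨h0.trans_le h1, (one_div_le_one_div_of_le h0 h1).trans ?_⟩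
    rw [Real.exp_neg, one_div, inv_inv]
    have : 0 ≤ Real.exp 1 * x ^ (-a) := by positivity
    linarith

/-- Convergence of the left-hand integral: near `0` the integrand is `O(x ^ (Re s - 2))`, and at
infinity it decays exponentially. -/
lemma integrableOn_div_lowerGamma {a : ℝ} (ha : 0 < a) {s : ℂ} (hs : 1 < s.re) :
    IntegrableOn (fun x : ℝ => (x : ℂ) ^ (s + (a : ℂ) - 2) * (Real.exp (-x) : ℂ) /
      ((a * lowerGamma a x : ℝ) : ℂ)) (Ioi 0) := by
  have hg : IntegrableOn (fun x : ℝ => Real.exp 1 * (Real.exp (-x) * x ^ (s.re - 1 - 1)) +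
      Real.exp 1 * (Real.exp (-x) * x ^ (s.re + a - 1 - 1))) (Ioi 0) :=
    ((Real.GammaIntegral_convergent (by linarith)).const_mul _).add
      ((Real.GammaIntegral_convergent (by linarith)).const_mul _)
  have hm := (lowerGamma_mono ha).measurable
  refine hg.mono' (Measurable.aestronglyMeasurable (by fun_prop)) ?_
  refine (ae_restrict_iff' measurableSet_Ioi).2 (.of_forall fun x (hx : 0 < x) => ?_)
  obtain ⟨hpos, hle⟩ := one_div_lowerGamma_le ha hx
  rw [norm_div, norm_mul, Complex.norm_cpow_eq_rpow_re_of_pos hx, Complex.norm_real,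
    Complex.norm_real, Real.norm_of_nonneg (Real.exp_pos _).le, Real.norm_of_nonneg hpos.le]
  have hre : (s + (a : ℂ) - 2).re = s.re + a - 2 := by simp
  have hx2 : x ^ (s.re - 1 - 1) = x ^ (s.re + a - 2) * x ^ (-a) := by
    rw [← Real.rpow_add hx]; ring_nf
  rw [hre, hx2, show s.re + a - 1 - 1 = s.re + a - 2 by ring, div_eq_mul_one_div]
  calc _ ≤ x ^ (s.re + a - 2) * Real.exp (-x) * (Real.exp 1 * x ^ (-a) + Real.exp 1) := by gcongr
    _ = _ := by ring

theorem stmt_11 (a : ℝ) (ha : 0 < a) (s : ℂ) (hs : 1 < s.re) :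
    ∫ x in Set.Ioi (0 : ℝ),
        (x : ℂ) ^ (s + (a : ℂ) - 2) * (Real.exp (-x) : ℂ) / ((a * lowerGamma a x : ℝ) : ℂ) =
      Complex.Gamma (s - 1) + ((a / (1 + a) : ℝ) : ℂ) * Complex.Gamma s +
        ∫ x in Set.Ioi (0 : ℝ),
          ((1 / (a * lowerGamma a x) - x ^ (-a) - (a / (1 + a)) * x ^ (1 - a) : ℝ) : ℂ) *
            (x : ℂ) ^ (s + (a : ℂ) - 2) * (Real.exp (-x) : ℂ) := by
  have hs1 : 0 < (s - 1).re := by simpa using hs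
  have hs0 : 0 < s.re := by linarith
  have hI := integrableOn_div_lowerGamma ha hs
  have h1 := Complex.GammaIntegral_convergent hs1
  have h2 := (Complex.GammaIntegral_convergent hs0).const_mul ((a / (1 + a) : ℝ) : ℂ)
  have key : ∫ x in Set.Ioi (0 : ℝ),
      ((1 / (a * lowerGamma a x) - x ^ (-a) - (a / (1 + a)) * x ^ (1 - a) : ℝ) : ℂ) *
            (x : ℂ) ^ (s + (a : ℂ) - 2) * (Real.exp (-x) : ℂ) =
      ∫ x in Set.Ioi (0 : ℝ),
        ((x : ℂ) ^ (s + (a : ℂ) - 2) * (Real.exp (-x) : ℂ) / ((a * lowerGamma a x : ℝ) : ℂ) -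
          (Real.exp (-x) : ℂ) * (x : ℂ) ^ (s - 1 - 1) -
          ((a / (1 + a) : ℝ) : ℂ) * ((Real.exp (-x) : ℂ) * (x : ℂ) ^ (s - 1))) := by
    refine setIntegral_congr_fun measurableSet_Ioi fun x (hx : 0 < x) => ?_
    have hx' : (x : ℂ) ≠ 0 := by exact_mod_cast hx.ne'
    have e1 : (x : ℂ) ^ (s - 1 - 1) = ((x ^ (-a) : ℝ) : ℂ) * (x : ℂ) ^ (s + (a : ℂ) - 2) := by
      rw [Complex.ofReal_cpow hx.le, ← Complex.cpow_add _ _ hx']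
      congr 1; push_cast; ring
    have e2 : (x : ℂ) ^ (s - 1) = ((x ^ (1 - a) : ℝ) : ℂ) * (x : ℂ) ^ (s + (a : ℂ) - 2) := by
      rw [Complex.ofReal_cpow hx.le, ← Complex.cpow_add _ _ hx']
      congr 1; push_cast; ring
    simp only [e1, e2, Complex.ofReal_sub, Complex.ofReal_mul, Complex.ofReal_div,
      Complex.ofReal_one]
    ring
  have hsub := integral_sub (hI.sub h1) h2
  simp only [Pi.sub_apply] at hsub
  rw [key, hsub, integral_sub hI h1, integral_const_mul,
    Complex.Gamma_eq_integral hs1, Complex.Gamma_eq_integral hs0, Complex.GammaIntegral,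
    Complex.GammaIntegral]
  ring
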